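/- arXiv:2002.03904 — 2 statements merged into one kernel-verified Lean document; each statement's English description precedes it below -/
import Mathlib

section
/- Let X and Y be smooth complex normed spaces with dim X ≥ 2, equipped with their unique compatible semi-inner products, and let f : X → Y be a surjective mapping such that |[f(x), f(y)]| = |[x, y]| for all x, y ∈ X. Then there exist a surjective isometry U : X → Y that is either linear or conjugate-linear, and a function σ : X → ℂ with |σ(x)| = 1 for all x, such that f(x) = σ(x) U x for all x ∈ X. -/
open RCLike

/-- A support functional at `x`: a norm-one continuous linear functional with `φ x = ‖x‖`. -/
def SuppFunc (𝕜 : Type*) [RCLike 𝕜] {X : Type*} [NormedAddCommGroup X] [NormedSpace 𝕜 X]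
    (x : X) (φ : X →L[𝕜] 𝕜) : Prop :=
  ‖φ‖ = 1 ∧ φ x = (‖x‖ : 𝕜)

/-- `X` is smooth at `x` if there is a unique support functional at `x`. -/
def NormSmoothAt (𝕜 : Type*) [RCLike 𝕜] {X : Type*} [NormedAddCommGroup X] [NormedSpace 𝕜 X]
    (x : X) : Prop := ∃! φ : X →L[𝕜] 𝕜, SuppFunc 𝕜 x φ

/-- `X` is smooth if it is smooth at every nonzero point. -/
def NormSmooth (𝕜 : Type*) (X : Type*) [RCLike 𝕜] [NormedAddCommGroup X] [NormedSpace 𝕜 X] :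
    Prop := ∀ x : X, x ≠ 0 → NormSmoothAt 𝕜 x

/-- `sip` is the canonical semi-inner product `[u,v] = ‖v‖ * φ_v u` built from support
functionals (on a smooth space this pins `sip` down uniquely). -/
def IsCompatSIP (𝕜 : Type*) {X : Type*} [RCLike 𝕜] [NormedAddCommGroup X] [NormedSpace 𝕜 X]
    (sip : X → X → 𝕜) : Prop :=
  (∀ u : X, sip u 0 = 0) ∧
  ∀ (u v : X) (φ : X →L[𝕜] 𝕜), SuppFunc 𝕜 v φ → sip u v = (‖v‖ : 𝕜) * φ u

/-- Birkhoff–James orthogonality: `x ⊥ y` iff `‖x + a • y‖ ≥ ‖x‖` for all scalars. -/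
def BJOrth (𝕜 : Type*) {X : Type*} [RCLike 𝕜] [NormedAddCommGroup X] [NormedSpace 𝕜 X]
    (x y : X) : Prop := ∀ a : 𝕜, ‖x‖ ≤ ‖x + a • y‖

/-- A semi-inner product compatible with the norm: additive and homogeneous in the first
variable, conjugate-homogeneous in the second, positive definite, Cauchy–Schwarz, and
`[x,x] = ‖x‖²`. -/
def IsSIP (𝕜 : Type*) {X : Type*} [RCLike 𝕜] [NormedAddCommGroup X] [NormedSpace 𝕜 X]
    (sip : X → X → 𝕜) : Prop :=
  (∀ x y z : X, sip (x + y) z = sip x z + sip y z) ∧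
  (∀ (a : 𝕜) (x y : X), sip (a • x) y = a * sip x y) ∧
  (∀ (a : 𝕜) (x y : X), sip x (a • y) = (starRingEnd 𝕜) a * sip x y) ∧
  (∀ x : X, x ≠ 0 → 0 < re (sip x x) ∧ im (sip x x) = 0) ∧
  (∀ x y : X, ‖sip x y‖ ≤ Real.sqrt (re (sip x x)) * Real.sqrt (re (sip y y))) ∧
  (∀ x : X, sip x x = (‖x‖ : 𝕜) ^ 2)

open Module Submodule

namespace WignerSmooth

/-- Every finite piece of every linear functional agrees with some member of the family `P`. -/
def Represents {ι E : Type*} [AddCommGroup E] [Module ℂ E] (P : ι → E →ₗ[ℂ] ℂ) : Prop :=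
  ∀ (φ : E →ₗ[ℂ] ℂ) (s : Set E), s.Finite → ∃ w, ∀ v ∈ s, P w v = φ v

/-- `Q w u / Q w x'` is the image of `P w y / P w x` under `τ`, whenever `P w x ≠ 0`. -/
def RatioIntertwined {ι E F : Type*} [AddCommGroup E] [Module ℂ E] [AddCommGroup F] [Module ℂ F]
    (P : ι → E →ₗ[ℂ] ℂ) (Q : ι → F →ₗ[ℂ] ℂ) (x : E) (x' : F) (τ : ℂ →+* ℂ) (y : E) (u : F) :
    Prop :=
  ∀ w, P w x ≠ 0 → Q w u = τ (P w y / P w x) * Q w x'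

section Complex

theorem re_eq_of_norm_one_add_eq {k l : ℂ} (h : ‖k‖ = ‖l‖) (h1 : ‖1 + k‖ = ‖1 + l‖) :
    k.re = l.re := by
  have h' : ‖k‖ ^ 2 = ‖l‖ ^ 2 := by rw [h]
  have h1' : ‖1 + k‖ ^ 2 = ‖1 + l‖ ^ 2 := by rw [h1]
  simp only [Complex.sq_norm, Complex.normSq_apply, Complex.add_re, Complex.add_im,
    Complex.one_re, Complex.one_im] at h' h1'
  linarith

theorem eq_one_of_norm_of_re {k : ℂ} (h : ‖k‖ = 1) (hre : k.re = 1) : k = 1 := by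
  have h' : ‖k‖ ^ 2 = 1 := by rw [h]; norm_num
  rw [Complex.sq_norm, Complex.normSq_apply, hre] at h'
  exact Complex.ext hre (by simpa using h')

theorem eq_I_or_neg_I_of_norm_of_re {k : ℂ} (h : ‖k‖ = 1) (hre : k.re = 0) :
    k = Complex.I ∨ k = -Complex.I := by
  have h' : ‖k‖ ^ 2 = 1 := by rw [h]; norm_num
  rw [Complex.sq_norm, Complex.normSq_apply, hre] at h'
  rcases mul_self_eq_one_iff.1 (by linarith : k.im * k.im = 1) with h1 | h1
  · exact Or.inl (Complex.ext (by simpa using hre) (by simpa using h1))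
  · exact Or.inr (Complex.ext (by simpa using hre) (by simpa using h1))

/-- The two continuous field endomorphisms of `ℂ`. -/
def IsIdOrConj (τ : ℂ →+* ℂ) : Prop := τ = RingHom.id ℂ ∨ τ = starRingEnd ℂ

theorem IsIdOrConj.norm_map {τ : ℂ →+* ℂ} (h : IsIdOrConj τ) (a : ℂ) : ‖τ a‖ = ‖a‖ := by
  rcases h with rfl | rfl <;> simp

theorem IsIdOrConj.map_map {τ : ℂ →+* ℂ} (h : IsIdOrConj τ) (a : ℂ) : τ (τ a) = a := by
  rcases h with rfl | rfl <;> simp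

theorem IsIdOrConj.eq_of_map_I {τ υ : ℂ →+* ℂ} (hτ : IsIdOrConj τ) (hυ : IsIdOrConj υ)
    (h : τ Complex.I = υ Complex.I) : τ = υ := by
  have hne : Complex.I ≠ -Complex.I := fun h => by
    have := congrArg Complex.im h
    norm_num at this
  rcases hτ with rfl | rfl <;> rcases hυ with rfl | rfl <;> simp_all [Ne.symm hne]

end Complex

section Algebra

variable {ι E F : Type*} [AddCommGroup E] [Module ℂ E] [AddCommGroup F] [Module ℂ F]
  {P : ι → E →ₗ[ℂ] ℂ} {Q : ι → F →ₗ[ℂ] ℂ} {f : E → F}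

theorem exists_linearMap_eq_on_of_notMem {p : Submodule ℂ E} (φ : E →ₗ[ℂ] ℂ) {v : E}
    (hv : v ∉ p) (a : ℂ) : ∃ ψ : E →ₗ[ℂ] ℂ, (∀ u ∈ p, ψ u = φ u) ∧ ψ v = a := by
  obtain ⟨ψ, h1, h2⟩ := LinearMap.exists_extend_of_notMem (φ.comp p.subtype) hv a
  exact ⟨ψ, fun u hu => LinearMap.congr_fun h1 ⟨u, hu⟩, h2⟩

theorem Represents.exists_apply_eq (hP : Represents P) {x : E} (hx : x ≠ 0) (a : ℂ) :
    ∃ w, P w x = a := by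
  obtain ⟨φ, -, h⟩ := exists_linearMap_eq_on_of_notMem (p := ⊥) 0 (by simpa using hx) a
  obtain ⟨w, hw⟩ := hP φ {x} (Set.toFinite _)
  exact ⟨w, by rw [hw x rfl, h]⟩

theorem Represents.exists_apply_eq_pair (hP : Represents P) {x y : E} (hx : x ≠ 0)
    (hy : y ∉ span ℂ {x}) (a b : ℂ) : ∃ w, P w x = a ∧ P w y = b := by
  obtain ⟨φ, -, h⟩ := exists_linearMap_eq_on_of_notMem (p := ⊥) 0 (by simpa using hx) a
  obtain ⟨ψ, h1, h2⟩ := exists_linearMap_eq_on_of_notMem φ hy b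
  obtain ⟨w, hw⟩ := hP ψ {x, y} (Set.toFinite _)
  exact ⟨w, by rw [hw x (by simp), h1 x (mem_span_singleton_self x), h],
    by rw [hw y (by simp), h2]⟩

theorem Represents.exists_apply_eq_triple (hP : Represents P) {x y z : E} (hx : x ≠ 0)
    (hy : y ∉ span ℂ {x}) (hz : z ∉ span ℂ {x, y}) (a b c : ℂ) :
    ∃ w, P w x = a ∧ P w y = b ∧ P w z = c := by
  obtain ⟨φ, -, h⟩ := exists_linearMap_eq_on_of_notMem (p := ⊥) 0 (by simpa using hx) a
  obtain ⟨ψ, h1, h2⟩ := exists_linearMap_eq_on_of_notMem φ hy b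
  obtain ⟨χ, h3, h4⟩ := exists_linearMap_eq_on_of_notMem ψ hz c
  obtain ⟨w, hw⟩ := hP χ {x, y, z} (Set.toFinite _)
  exact ⟨w, by rw [hw x (by simp), h3 x (subset_span (by simp)),
      h1 x (mem_span_singleton_self x), h],
    by rw [hw y (by simp), h3 y (subset_span (by simp)), h2], by rw [hw z (by simp), h4]⟩

theorem Represents.mem_span_pair (hQ : Represents Q) {y z u : F}
    (h : ∀ w, Q w y = 0 → Q w z = 0 → Q w u = 0) : u ∈ span ℂ {y, z} := by
  by_contra hu
  obtain ⟨φ, hφ, hker⟩ := Submodule.exists_le_ker_of_notMem hu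
  obtain ⟨w, hw⟩ := hQ φ {y, z, u} (Set.toFinite _)
  refine hφ ?_
  rw [← hw u (by simp)]
  refine h w ?_ ?_
  · rw [hw y (by simp)]
    exact hker (subset_span (by simp))
  · rw [hw z (by simp)]
    exact hker (subset_span (by simp))

theorem Represents.exists_apply_ne_zero_pair (hQ : Represents Q) {u v : F} (hu : u ≠ 0)
    (hv : v ≠ 0) : ∃ w, Q w u ≠ 0 ∧ Q w v ≠ 0 := by
  by_cases h : v ∈ span ℂ {u}
  · obtain ⟨c, rfl⟩ := mem_span_singleton.1 h
    obtain ⟨w, hw⟩ := hQ.exists_apply_eq hu 1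
    exact ⟨w, by simp [hw], by simpa [hw] using (smul_ne_zero_iff.1 hv).1⟩
  · obtain ⟨w, h1, h2⟩ := hQ.exists_apply_eq_pair hu h 1 1
    exact ⟨w, by simp [h1], by simp [h2]⟩

theorem apply_map_eq_zero_iff
    (hf : ∀ w x, ‖Q w (f x)‖ = ‖P w x‖)
    (w : ι) (x : E) : Q w (f x) = 0 ↔ P w x = 0 := by
  rw [← norm_eq_zero, hf, norm_eq_zero]

theorem exists_map_eq_of_mem_span_pair
    (hQ : Represents Q) (hf : ∀ w x, ‖Q w (f x)‖ = ‖P w x‖) {x y z : E} (hz : z ∈ span ℂ {x, y}) :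
    ∃ a b : ℂ, a • f x + b • f y = f z := by
  refine Submodule.mem_span_pair.1 (hQ.mem_span_pair fun w h1 h2 => ?_)
  rw [apply_map_eq_zero_iff hf] at h1 h2 ⊢
  obtain ⟨a, b, rfl⟩ := Submodule.mem_span_pair.1 hz
  simp [h1, h2]

theorem map_ne_zero_of_ne_zero
    (hP : Represents P) (hf : ∀ w x, ‖Q w (f x)‖ = ‖P w x‖) {x : E} (hx : x ≠ 0) : f x ≠ 0 := by
  obtain ⟨w, hw⟩ := hP.exists_apply_eq hx 1
  intro h
  have := hf w x
  simp [h, hw] at this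

theorem exists_unit_re_ratio_eq
    (hP : Represents P) (hQ : Represents Q) (hf : ∀ w x, ‖Q w (f x)‖ = ‖P w x‖)
    {x y : E} (hx : x ≠ 0) (hy : y ∉ span ℂ {x}) {l : ℂ}
    (hl : ‖l‖ = 1) :
    ∃ k : ℂ, ‖k‖ = 1 ∧ ∀ w, P w x ≠ 0 →
      (k * (Q w (f y) / Q w (f x))).re = (l * (P w y / P w x)).re := by
  obtain ⟨a, b, hab⟩ := exists_map_eq_of_mem_span_pair hQ hf
    (Submodule.mem_span_pair.2 ⟨1, l, rfl⟩ : (1 : ℂ) • x + l • y ∈ span ℂ {x, y})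
  have key : ∀ w, ‖a * Q w (f x) + b * Q w (f y)‖ = ‖P w x + l * P w y‖ := fun w => by
    have := hf w ((1 : ℂ) • x + l • y)
    rw [← hab] at this
    simpa using this
  have ha : ‖a‖ = 1 := by
    obtain ⟨w, h1, h2⟩ := hP.exists_apply_eq_pair hx hy 1 0
    have h3 := hf w x
    have h4 := key w
    rw [(apply_map_eq_zero_iff hf w y).2 h2] at h4
    simpa [h1, h2, h3] using h4
  have hb : ‖b‖ = 1 := by
    obtain ⟨w, h1, h2⟩ := hP.exists_apply_eq_pair hx hy 0 1
    have h3 := hf w y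
    have h4 := key w
    rw [(apply_map_eq_zero_iff hf w x).2 h1] at h4
    simpa [h1, h2, h3, hl] using h4
  have ha0 : a ≠ 0 := norm_ne_zero_iff.1 (by simp [ha])
  refine ⟨b / a, by simp [ha, hb], fun w hw => re_eq_of_norm_one_add_eq ?_ ?_⟩
  · simp [ha, hb, hl, hf]
  · have hw' : Q w (f x) ≠ 0 := fun h => hw ((apply_map_eq_zero_iff hf w x).1 h)
    have e1 : 1 + b / a * (Q w (f y) / Q w (f x))
        = (a * Q w (f x) + b * Q w (f y)) / (a * Q w (f x)) := by field_simp
    have e2 : 1 + l * (P w y / P w x) = (P w x + l * P w y) / P w x := by field_simp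
    rw [e1, e2, norm_div, norm_div, key, norm_mul, ha, hf, one_mul]

theorem exists_ratioIntertwined_of_notMem
    (hP : Represents P) (hQ : Represents Q) (hf : ∀ w x, ‖Q w (f x)‖ = ‖P w x‖)
    {x y : E} (hx : x ≠ 0) (hy : y ∉ span ℂ {x}) :
    ∃ τ, IsIdOrConj τ ∧ ∃ s : ℂ, ‖s‖ = 1 ∧ RatioIntertwined P Q x (f x) τ y (s • f y) := by
  obtain ⟨s, hs, h1⟩ := exists_unit_re_ratio_eq hP hQ hf hx hy (l := 1) (by simp)
  obtain ⟨k, hk, h2⟩ := exists_unit_re_ratio_eq hP hQ hf hx hy (l := Complex.I) (by simp)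
  have hs0 : s ≠ 0 := norm_ne_zero_iff.1 (by simp [hs])
  have h2' : ∀ w, P w x ≠ 0 → (k / s * (s * (Q w (f y) / Q w (f x)))).re
      = (Complex.I * (P w y / P w x)).re := fun w hw => by
    rw [← mul_assoc, div_mul_cancel₀ _ hs0, h2 w hw]
  have he : ‖k / s‖ = 1 := by simp [hk, hs]
  have he0 : (k / s).re = 0 := by
    obtain ⟨w, hwx, hwy⟩ := hP.exists_apply_eq_pair hx hy 1 1
    have hw : P w x ≠ 0 := by simp [hwx]
    have hq : s * (Q w (f y) / Q w (f x)) = 1 := by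
      apply eq_one_of_norm_of_re
      · simp [hs, hf, hwx, hwy]
      · rw [h1 w hw]
        simp [hwx, hwy]
    have := h2' w hw
    rw [hq] at this
    simpa [hwx, hwy] using this
  have fin : ∀ τ : ℂ →+* ℂ, (∀ w, P w x ≠ 0 →
      s * (Q w (f y) / Q w (f x)) = τ (P w y / P w x)) →
      RatioIntertwined P Q x (f x) τ y (s • f y) := fun τ h w hw => by
    have hw' : Q w (f x) ≠ 0 := fun h => hw ((apply_map_eq_zero_iff hf w x).1 h)
    rw [← h w hw, map_smul, smul_eq_mul]
    field_simp
  rcases eq_I_or_neg_I_of_norm_of_re he he0 with e | e <;> rw [e] at h2'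
  · refine ⟨RingHom.id ℂ, Or.inl rfl, s, hs, fin _ fun w hw => ?_⟩
    have h3 := h1 w hw
    have h4 := h2' w hw
    rw [Complex.I_mul_re, Complex.I_mul_re] at h4
    rw [one_mul] at h3
    exact Complex.ext h3 (neg_injective h4)
  · refine ⟨starRingEnd ℂ, Or.inr rfl, s, hs, fin _ fun w hw => ?_⟩
    have h3 := h1 w hw
    have h4 := h2' w hw
    rw [neg_mul, Complex.neg_re, Complex.I_mul_re, Complex.I_mul_re, neg_neg] at h4
    rw [one_mul] at h3
    exact Complex.ext (by rw [h3, Complex.conj_re]) (by rw [h4, Complex.conj_im])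

theorem ratioIntertwined_ringHom_unique
    (hP : Represents P) (hQ : Represents Q) (hf : ∀ w x, ‖Q w (f x)‖ = ‖P w x‖)
    {x y z : E} (hx : x ≠ 0) (hy : y ∉ span ℂ {x})
    (hz : z ∉ span ℂ {x}) {τ υ : ℂ →+* ℂ} (hτ : IsIdOrConj τ) (hυ : IsIdOrConj υ) {s t : ℂ}
    (hs : s ≠ 0) (ht : t ≠ 0) (h1 : RatioIntertwined P Q x (f x) τ y (s • f y))
    (h2 : RatioIntertwined P Q x (f x) υ z (t • f z)) : τ = υ := by
  have hne : ∀ w, P w x = 1 → Q w (f x) ≠ 0 := fun w hw h => by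
    rw [apply_map_eq_zero_iff hf, hw] at h
    exact one_ne_zero h
  by_cases hzy : z ∈ span ℂ {x, y}
  · obtain ⟨a, b, hab⟩ := exists_map_eq_of_mem_span_pair hQ hf hzy
    obtain ⟨c, d, rfl⟩ := Submodule.mem_span_pair.1 hzy
    have hd : d ≠ 0 := by
      rintro rfl
      exact hz (by simpa using smul_mem _ c (mem_span_singleton_self x))
    have key : ∀ e : ℂ, υ (c + d * e) = t * a + t * b / s * τ e := fun e => by
      obtain ⟨w, hwx, hwy⟩ := hP.exists_apply_eq_pair hx hy 1 e
      have h3 := h1 w (by simp [hwx])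
      have h4 := h2 w (by simp [hwx])
      have := hne w hwx
      rw [← hab] at h4
      simp only [map_add, map_smul, smul_eq_mul, hwx, hwy, mul_one, div_one] at h3 h4
      rw [map_add υ]
      apply mul_right_cancel₀ this
      rw [← h4]
      field_simp
      linear_combination b * h3
    have k0 := key 0
    have k1 := key 1
    have kI := key Complex.I
    simp only [map_add, map_mul, map_zero, map_one, mul_zero, add_zero, mul_one] at k0 k1 kI
    have hd' : υ d ≠ 0 := by simpa using hd
    refine hτ.eq_of_map_I hυ (mul_left_cancel₀ hd' ?_)
    linear_combination (τ Complex.I) * k1 - kI + (1 - τ Complex.I) * k0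
  · have hyz : y + z ∉ span ℂ {x} := fun h => hzy <| by
      have h3 : y + z ∈ span ℂ {x, y} := span_mono (by simp) h
      simpa using sub_mem h3 (subset_span (by simp) : y ∈ span ℂ {x, y})
    obtain ⟨ρ, hρ, r, hr, h3⟩ := exists_ratioIntertwined_of_notMem hP hQ hf hx hyz
    obtain ⟨a, b, hab⟩ := exists_map_eq_of_mem_span_pair hQ hf
      (Submodule.mem_span_pair.2 ⟨1, 1, by simp⟩ : y + z ∈ span ℂ {y, z})
    have key : ∀ c d : ℂ, ρ (c + d) = r * a / s * τ c + r * b / t * υ d := fun c d => by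
      obtain ⟨w, hwx, hwy, hwz⟩ := hP.exists_apply_eq_triple hx hy hzy 1 c d
      have h4 := h1 w (by simp [hwx])
      have h5 := h2 w (by simp [hwx])
      have h6 := h3 w (by simp [hwx])
      have := hne w hwx
      rw [← hab] at h6
      simp only [map_add (P w), map_add (Q w), map_smul, smul_eq_mul, hwx, hwy, hwz,
        div_one] at h4 h5 h6
      apply mul_right_cancel₀ this
      rw [← h6]
      field_simp
      linear_combination (r * a * t) * h4 + (r * b * s) * h5
    have k1 := key 1 0
    have kI := key Complex.I 0
    have l1 := key 0 1
    have lI := key 0 Complex.I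
    simp only [map_zero, map_one, mul_zero, add_zero, zero_add, mul_one] at k1 kI l1 lI
    rw [← k1, one_mul] at kI
    rw [← l1, one_mul] at lI
    exact hτ.eq_of_map_I hυ (kI.symm.trans lI)

theorem exists_ratioIntertwined
    (hP : Represents P) (hQ : Represents Q) (hf : ∀ w x, ‖Q w (f x)‖ = ‖P w x‖)
    {x y₀ : E} (hx : x ≠ 0) (hy₀ : y₀ ∉ span ℂ {x}) :
    ∃ τ, IsIdOrConj τ ∧ ∀ y, ∃ s : ℂ, ‖s‖ = 1 ∧
      RatioIntertwined P Q x (f x) τ y (s • f y) := by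
  have hne : ∀ {s : ℂ}, ‖s‖ = 1 → s ≠ 0 := fun h => norm_ne_zero_iff.1 (by simp [h])
  obtain ⟨τ, hτ, t, ht, h⟩ := exists_ratioIntertwined_of_notMem hP hQ hf hx hy₀
  refine ⟨τ, hτ, fun y => ?_⟩
  by_cases hy : y ∈ span ℂ {x}
  · obtain ⟨a, b, hab⟩ := exists_map_eq_of_mem_span_pair hQ hf
      (by simpa using hy : y ∈ span ℂ {x, x})
    rw [← add_smul] at hab
    generalize a + b = c at hab
    obtain ⟨d, rfl⟩ := mem_span_singleton.1 hy
    have hc : ‖c‖ = ‖d‖ := by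
      obtain ⟨w, hw⟩ := hP.exists_apply_eq hx 1
      have h1 := hf w x
      have h2 := hf w (d • x)
      rw [← hab] at h2
      simpa [h1, hw] using h2
    obtain ⟨s, hs, hsc⟩ : ∃ s : ℂ, ‖s‖ = 1 ∧ s * c = τ d := by
      by_cases hc0 : c = 0
      · have hd : d = 0 := by rw [← norm_eq_zero, ← hc, hc0, norm_zero]
        exact ⟨1, by simp, by simp [hc0, hd]⟩
      · have : ‖c‖ ≠ 0 := by simpa using hc0
        refine ⟨τ d / c, ?_, div_mul_cancel₀ _ hc0⟩
        rw [norm_div, hτ.norm_map, ← hc, div_self this]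
    refine ⟨s, hs, fun w hw => ?_⟩
    rw [← hab, smul_smul, hsc, map_smul, map_smul, smul_eq_mul, smul_eq_mul,
      mul_div_cancel_right₀ _ hw]
  · obtain ⟨υ, hυ, s, hs, h'⟩ := exists_ratioIntertwined_of_notMem hP hQ hf hx hy
    rw [ratioIntertwined_ringHom_unique hP hQ hf hx hy₀ hy hτ hυ (hne ht) (hne hs) h h']
    exact ⟨s, hs, h'⟩

theorem RatioIntertwined.unique
    (hP : Represents P) (hQ : Represents Q) (hf : ∀ w x, ‖Q w (f x)‖ = ‖P w x‖)
    {x y : E} (hx : x ≠ 0) {τ : ℂ →+* ℂ} {u v : F}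
    (hu : RatioIntertwined P Q x (f x) τ y u) (hv : RatioIntertwined P Q x (f x) τ y v) :
    u = v := by
  by_contra huv
  obtain ⟨w, h1, h2⟩ := hQ.exists_apply_ne_zero_pair (map_ne_zero_of_ne_zero hP hf hx)
    (sub_ne_zero.2 huv)
  rw [Ne, apply_map_eq_zero_iff hf] at h1
  exact h2 (by rw [map_sub, hu w h1, hv w h1, sub_self])

theorem RatioIntertwined.add {x y z : E} {x' u v : F} {τ : ℂ →+* ℂ}
    (hu : RatioIntertwined P Q x x' τ y u) (hv : RatioIntertwined P Q x x' τ z v) :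
    RatioIntertwined P Q x x' τ (y + z) (u + v) := fun w hw => by
  rw [map_add, map_add, hu w hw, hv w hw, add_div, map_add, add_mul]

theorem RatioIntertwined.smul {x y : E} {x' u : F} {τ : ℂ →+* ℂ}
    (hu : RatioIntertwined P Q x x' τ y u) (a : ℂ) :
    RatioIntertwined P Q x x' τ (a • y) (τ a • u) := fun w hw => by
  rw [map_smul, map_smul, hu w hw, smul_eq_mul, smul_eq_mul, mul_div_assoc, map_mul, mul_assoc]

theorem exists_semilinear_phase_equivalent
    (hP : Represents P) (hQ : Represents Q) (hf : ∀ w x, ‖Q w (f x)‖ = ‖P w x‖)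
    (hsurj : Function.Surjective f) {x y₀ : E}
    (hx : x ≠ 0) (hy₀ : y₀ ∉ span ℂ {x}) :
    ∃ τ : ℂ →+* ℂ, IsIdOrConj τ ∧ ∃ U : E → F, Function.Surjective U ∧
      (∀ y z, U (y + z) = U y + U z) ∧ (∀ (a : ℂ) y, U (a • y) = τ a • U y) ∧
      ∃ σ : E → ℂ, (∀ y, ‖σ y‖ = 1) ∧ ∀ y, f y = σ y • U y := by
  obtain ⟨τ, hτ, h⟩ := exists_ratioIntertwined hP hQ hf hx hy₀
  choose s hs hU using h
  have hs0 : ∀ y, s y ≠ 0 := fun y => norm_ne_zero_iff.1 (by simp [hs])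
  have hsmul : ∀ (a : ℂ) y, s (a • y) • f (a • y) = τ a • s y • f y := fun a y =>
    (hU _).unique hP hQ hf hx ((hU y).smul a)
  refine ⟨τ, hτ, fun y => s y • f y, fun v => ?_,
    fun y z => (hU _).unique hP hQ hf hx ((hU y).add (hU z)), hsmul,
    fun y => (s y)⁻¹, fun y => by simp [hs], fun y => (inv_smul_smul₀ (hs0 y) _).symm⟩
  obtain ⟨y, rfl⟩ := hsurj v
  refine ⟨τ (s y)⁻¹ • y, ?_⟩
  simp only [hsmul, hτ.map_map, inv_smul_smul₀ (hs0 y)]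

end Algebra

section Normed

variable {X : Type*} [NormedAddCommGroup X] [NormedSpace ℂ X] {sip : X → X → ℂ}

theorem _root_.IsCompatSIP.exists_linearMap (h : IsCompatSIP ℂ sip) (w : X) :
    ∃ φ : X →ₗ[ℂ] ℂ, ∀ u, sip u w = φ u := by
  by_cases hw : w = 0
  · exact ⟨0, fun u => by simp [hw, h.1]⟩
  · obtain ⟨g, hg⟩ := exists_dual_vector ℂ w (norm_ne_zero_iff.2 hw)
    exact ⟨(‖w‖ : ℂ) • (g : X →ₗ[ℂ] ℂ), fun u => by simpa using h.2 u w g hg⟩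

theorem _root_.IsCompatSIP.norm_self (h : IsCompatSIP ℂ sip) (w : X) : ‖sip w w‖ = ‖w‖ ^ 2 := by
  by_cases hw : w = 0
  · simp [hw, h.1]
  · obtain ⟨g, hg⟩ := exists_dual_vector ℂ w (norm_ne_zero_iff.2 hw)
    rw [h.2 w w g hg, hg.2]
    simp [sq]

theorem exists_unit_norm_apply_eq_norm {V : Type*} [NormedAddCommGroup V] [NormedSpace ℂ V]
    [FiniteDimensional ℂ V] (φ : V →L[ℂ] ℂ) (hφ : φ ≠ 0) : ∃ v, ‖v‖ = 1 ∧ ‖φ v‖ = ‖φ‖ := by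
  have : ProperSpace V := FiniteDimensional.proper ℂ V
  have : Nontrivial V := by
    by_contra hV
    rw [not_nontrivial_iff_subsingleton] at hV
    exact hφ (Subsingleton.elim _ _)
  obtain ⟨u, hu⟩ := exists_norm_eq V (zero_le_one (α := ℝ))
  obtain ⟨v, hv, hmax⟩ := (isCompact_sphere (0 : V) 1).exists_isMaxOn
    ⟨u, by simpa using hu⟩ (φ.continuous.norm.continuousOn)
  have hv1 : ‖v‖ = 1 := by simpa using hv
  refine ⟨v, hv1, le_antisymm (by simpa [hv1] using φ.le_opNorm v)
    (φ.opNorm_le_of_unit_norm (norm_nonneg _) fun z hz => hmax (by simpa using hz))⟩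

theorem _root_.IsCompatSIP.exists_eq_on_finite (h : IsCompatSIP ℂ sip) (φ : X →ₗ[ℂ] ℂ) (s : Set X)
    (hs : s.Finite) : ∃ w, ∀ v ∈ s, sip v w = φ v := by
  have : FiniteDimensional ℂ (span ℂ s) := FiniteDimensional.span_of_finite ℂ hs
  let ψ : span ℂ s →L[ℂ] ℂ := LinearMap.toContinuousLinearMap (φ.comp (span ℂ s).subtype)
  have hψ : ∀ v, ψ v = φ v := fun v => rfl
  by_cases h0 : ψ = 0
  · refine ⟨0, fun v hv => ?_⟩
    rw [h.1, ← hψ ⟨v, subset_span hv⟩, h0]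
    rfl
  obtain ⟨e, he, hmax⟩ := exists_unit_norm_apply_eq_norm ψ h0
  obtain ⟨g, hg, hgn⟩ := exists_extension_norm_eq (span ℂ s) ψ
  have hn : ‖ψ‖ ≠ 0 := fun h => h0 (ψ.opNorm_zero_iff.1 h)
  have hnC : (‖ψ‖ : ℂ) ≠ 0 := by exact_mod_cast hn
  have he' : ‖(e : X)‖ = 1 := he
  have hw : ‖(starRingEnd ℂ (ψ e)) • (e : X)‖ = ‖ψ‖ := by
    rw [norm_smul, he', mul_one, RCLike.norm_conj, hmax]
  refine ⟨(starRingEnd ℂ (ψ e)) • (e : X), fun v hv => ?_⟩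
  rw [h.2 v _ ((‖ψ‖ : ℂ)⁻¹ • g) ⟨?_, ?_⟩, hw]
  · simp only [smul_apply, smul_eq_mul]
    rw [hg ⟨v, subset_span hv⟩, hψ]
    exact mul_inv_cancel_left₀ hnC _
  · rw [norm_smul, hgn, norm_inv, Complex.norm_real,
      Real.norm_of_nonneg (hmax ▸ norm_nonneg _), inv_mul_cancel₀ hn]
  · rw [hw, smul_apply, map_smul, hg, smul_eq_mul, smul_eq_mul,
      ← Complex.normSq_eq_conj_mul_self, Complex.normSq_eq_norm_sq, hmax]
    push_cast
    field_simp
    rfl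

end Normed

end WignerSmooth

theorem stmt12 {X Y : Type*} [NormedAddCommGroup X] [NormedSpace ℂ X]
    [NormedAddCommGroup Y] [NormedSpace ℂ Y]
    (hdim : 2 ≤ Module.rank ℂ X)
    (hsmX : NormSmooth ℂ X) (hsmY : NormSmooth ℂ Y)
    (sipX : X → X → ℂ) (hX : IsCompatSIP ℂ sipX)
    (sipY : Y → Y → ℂ) (hY : IsCompatSIP ℂ sipY)
    (f : X → Y) (hsurj : Function.Surjective f)
    (hf : ∀ x y : X, ‖sipY (f x) (f y)‖ = ‖sipX x y‖) :
    ∃ U : X → Y, Function.Surjective U ∧ (∀ x : X, ‖U x‖ = ‖x‖) ∧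
      (∀ x y : X, U (x + y) = U x + U y) ∧
      ((∀ (a : ℂ) (x : X), U (a • x) = a • U x) ∨
       (∀ (a : ℂ) (x : X), U (a • x) = (starRingEnd ℂ) a • U x)) ∧
      ∃ σ : X → ℂ, (∀ x : X, ‖σ x‖ = 1) ∧ ∀ x : X, f x = σ x • U x := by
  choose P hP using hX.exists_linearMap
  choose Q hQ using hY.exists_linearMap
  have hPrep : WignerSmooth.Represents P := fun φ s hs => by
    simpa only [hP] using hX.exists_eq_on_finite φ s hs
  have hQrep : WignerSmooth.Represents (fun w => Q (f w)) := fun φ s hs => by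
    obtain ⟨v, hv⟩ := hY.exists_eq_on_finite φ s hs
    obtain ⟨w, rfl⟩ := hsurj v
    exact ⟨w, fun u hu => by rw [← hQ, hv u hu]⟩
  have hPQ : ∀ w x, ‖Q (f w) (f x)‖ = ‖P w x‖ := fun w x => by rw [← hQ, ← hP, hf]
  have hnorm : ∀ x, ‖f x‖ = ‖x‖ := fun x => by
    have h := hf x x
    rw [hX.norm_self, hY.norm_self] at h
    exact (sq_eq_sq₀ (norm_nonneg _) (norm_nonneg _)).1 h
  obtain ⟨x, hx⟩ : ∃ x : X, x ≠ 0 := by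
    by_contra! h
    have : Subsingleton X := ⟨fun a b => by rw [h a, h b]⟩
    rw [rank_subsingleton'] at hdim
    exact absurd hdim (by simp)
  obtain ⟨y, hy⟩ : ∃ y : X, y ∉ Submodule.span ℂ {x} := by
    by_contra! h
    have h1 : Module.rank ℂ X ≤ 1 := rank_le_one_iff.2
      ⟨x, fun v => Submodule.mem_span_singleton.1 (h v)⟩
    exact absurd (hdim.trans h1) (by norm_num)
  obtain ⟨τ, hτ, U, hU, hadd, hsmul, σ, hσ, hfU⟩ :=
    WignerSmooth.exists_semilinear_phase_equivalent hPrep hQrep hPQ hsurj hx hy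
  refine ⟨U, hU, fun z => ?_, hadd, ?_, σ, hσ, hfU⟩
  · rw [← hnorm z, hfU z, norm_smul, hσ, one_mul]
  · rcases hτ with rfl | rfl
    · exact Or.inl hsmul
    · exact Or.inr hsmul
end

section
/- Let X and Y be real smooth normed spaces with Y strictly convex, with their unique compatible semi-inner products, and let f : X → Y be a surjective mapping. Then the following are equivalent: (i) |[f(x), f(y)]| = |[x, y]| for all x, y ∈ X; (ii) f is phase equivalent to a surjective linear isometry; (iii) {‖f(x)+f(y)‖, ‖f(x)-f(y)‖} = {‖x+y‖, ‖x-y‖} as sets for all x, y ∈ X. -/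
open RCLike

section SupportFunctionals

open Filter Topology

variable {E : Type*} [NormedAddCommGroup E] [NormedSpace ℝ E]

theorem exists_suppFunc {v : E} (hv : v ≠ 0) : ∃ φ : E →L[ℝ] ℝ, SuppFunc ℝ v φ :=
  exists_dual_vector ℝ v (norm_ne_zero_iff.mpr hv)

theorem SuppFunc.of_norm_le_one {v : E} (hv : v ≠ 0) {φ : E →L[ℝ] ℝ} (hφ : ‖φ‖ ≤ 1)
    (h : φ v = ‖v‖) : SuppFunc ℝ v φ := by
  refine ⟨le_antisymm hφ ?_, h⟩
  have hle := φ.le_opNorm v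
  rw [h, norm_norm] at hle
  have := norm_pos_iff.mpr hv
  nlinarith

theorem SuppFunc.neg {v : E} {φ : E →L[ℝ] ℝ} (h : SuppFunc ℝ v φ) : SuppFunc ℝ (-v) (-φ) :=
  ⟨by rw [norm_neg, h.1], by simp [h.2]⟩

theorem SuppFunc.apply_le {v : E} {φ : E →L[ℝ] ℝ} (h : SuppFunc ℝ v φ) (u : E) : φ u ≤ ‖u‖ := by
  have := φ.le_opNorm u
  rw [h.1, one_mul] at this
  exact (le_abs_self _).trans this

theorem SuppFunc.apply_self {v : E} {φ : E →L[ℝ] ℝ} (h : SuppFunc ℝ v φ) : φ v = ‖v‖ := h.2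

/-- A point outside a finite-dimensional subspace is separated from it by a functional which is
a support functional at a nonzero point (the residual of a best approximation). -/
theorem exists_suppFunc_vanishing_on (N : Submodule ℝ E) [FiniteDimensional ℝ N] {w : E}
    (hw : w ∉ N) :
    ∃ (v : E) (φ : E →L[ℝ] ℝ), v ≠ 0 ∧ SuppFunc ℝ v φ ∧ (∀ n ∈ N, φ n = 0) ∧ φ w ≠ 0 := by
  have : ProperSpace N := FiniteDimensional.proper_real N
  have hcont : Continuous fun n : N => ‖w - n‖ := by fun_prop
  have hlim : Tendsto (fun n : N => ‖w - n‖) (cocompact N) atTop := by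
    refine tendsto_atTop_mono (f := fun n : N => ‖n‖ - ‖w‖) (fun n => ?_)
      (tendsto_atTop_add_const_right _ (-‖w‖) (tendsto_norm_cocompact_atTop (E := N)))
    have := norm_sub_norm_le (n : E) w
    rwa [norm_sub_rev] at this
  obtain ⟨n₀, hn₀⟩ := hcont.exists_forall_le hlim
  set v : E := w - n₀ with hv
  have hv0 : v ≠ 0 := fun h => hw (by rw [sub_eq_zero.mp h]; exact n₀.2)
  obtain ⟨g, hg1, hg2⟩ := exists_dual_vector'' ℝ (N.mkQ v)
  have hnorm : ‖N.mkQ v‖ = ‖v‖ := by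
    refine le_antisymm (Submodule.Quotient.norm_mk_le N v) (le_of_forall_pos_le_add fun ε hε => ?_)
    obtain ⟨m, hm, hlt⟩ := Submodule.Quotient.norm_mk_lt (N.mkQ v) hε
    have hmem : v - m ∈ N := (Submodule.Quotient.eq N).mp hm.symm
    have := hn₀ (n₀ + ⟨v - m, hmem⟩)
    have hm' : w - ((n₀ + ⟨v - m, hmem⟩ : N) : E) = m := by
      simp [hv]; abel
    rw [hm'] at this
    exact this.trans hlt.le
  let φ : E →L[ℝ] ℝ := (g.toLinearMap ∘ₗ N.mkQ).mkContinuous 1 fun x => by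
    have h1 := g.le_opNorm (N.mkQ x)
    have h2 : ‖N.mkQ x‖ ≤ ‖x‖ := Submodule.Quotient.norm_mk_le N x
    have h3 : ‖g‖ * ‖N.mkQ x‖ ≤ 1 * ‖x‖ := by gcongr
    exact h1.trans h3
  have hφ : ∀ x, φ x = g (N.mkQ x) := fun _ => rfl
  have hφN : ∀ n ∈ N, φ n = 0 := fun n hn => by
    rw [hφ, Submodule.mkQ_apply, (Submodule.Quotient.mk_eq_zero N).mpr hn, map_zero]
  have hφv : φ v = ‖v‖ := by rw [hφ, hg2, hnorm]; rfl
  refine ⟨v, φ, hv0, .of_norm_le_one hv0 (LinearMap.mkContinuous_norm_le _ zero_le_one _) hφv,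
    hφN, ?_⟩
  have : φ w = φ v := by rw [hv, map_sub, hφN _ n₀.2, sub_zero]
  rw [this, hφv]
  exact norm_ne_zero_iff.mpr hv0

/-- At a point of smoothness, support functionals at nearby points converge weak-* to the
support functional. -/
theorem SuppFunc.tendsto_apply {x : E} (hx : x ≠ 0) (hsm : NormSmoothAt ℝ x) {φ : E →L[ℝ] ℝ}
    (hφ : SuppFunc ℝ x φ) {ι : Type*} {l : Filter ι} {p : ι → E} (hp : Tendsto p l (𝓝 x))
    {ψ : ι → E →L[ℝ] ℝ} (hψ : ∀ᶠ i in l, SuppFunc ℝ (p i) (ψ i)) (y : E) :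
    Tendsto (fun i => ψ i y) l (𝓝 (φ y)) := by
  have hlim : Tendsto (fun i => ψ i x) l (𝓝 ‖x‖) := by
    rw [tendsto_iff_norm_sub_tendsto_zero]
    have h0 : Tendsto (fun i => 2 * ‖p i - x‖) l (𝓝 0) := by
      simpa using (tendsto_iff_norm_sub_tendsto_zero.mp hp).const_mul 2
    refine squeeze_zero' (Eventually.of_forall fun _ => norm_nonneg _) ?_ h0
    filter_upwards [hψ] with i hi
    have h1 := hi.apply_le (p i - x)
    have h2 := hi.apply_le x
    rw [map_sub, hi.apply_self] at h1
    have h3 := norm_sub_norm_le x (p i)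
    rw [norm_sub_rev] at h3
    rw [Real.norm_eq_abs, abs_le]
    constructor <;> linarith [norm_nonneg (p i - x)]
  have hweak : Tendsto (fun i => StrongDual.toWeakDual (ψ i)) l (𝓝 (StrongDual.toWeakDual φ)) := by
    refine (WeakDual.isCompact_closedBall
      (0 : StrongDual ℝ E) 1).tendsto_nhds_of_unique_mapClusterPt ?_ ?_
    · filter_upwards [hψ] with i hi
      simp [hi.1]
    · intro χ hχ hcl
      have hev : MapClusterPt (χ x) l (fun i => ψ i x) :=
        hcl.continuousAt_comp (WeakDual.eval_continuous x).continuousAt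
      have hχx : χ x = ‖x‖ := by
        have : ClusterPt (χ x) (𝓝 ‖x‖) := ClusterPt.mono hev hlim
        exact eq_of_nhds_neBot this
      have hχ1 : ‖WeakDual.toStrongDual χ‖ ≤ 1 := by simpa using hχ
      have := hsm.unique (SuppFunc.of_norm_le_one hx hχ1 hχx) hφ
      rw [← this]; rfl
  exact ((WeakDual.eval_continuous y).tendsto _).comp hweak

theorem SuppFunc.tendsto_norm_sub_div {x : E} (hx : x ≠ 0) (hsm : NormSmoothAt ℝ x)
    {φ : E →L[ℝ] ℝ} (hφ : SuppFunc ℝ x φ) (y : E) :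
    Tendsto (fun t : ℝ => (‖x + t • y‖ - ‖x - t • y‖) / t) (𝓝[>] 0) (𝓝 (2 * φ y)) := by
  have key : ∀ s : ℝ, ∃ ψ : ℝ → E →L[ℝ] ℝ,
      (∀ᶠ t in 𝓝[>] (0 : ℝ), SuppFunc ℝ (x + (s * t) • y) (ψ t)) ∧
      Tendsto (fun t => ψ t y) (𝓝[>] 0) (𝓝 (φ y)) := by
    intro s
    have hp : Tendsto (fun t : ℝ => x + (s * t) • y) (𝓝[>] 0) (𝓝 x) := by
      have : Continuous fun t : ℝ => x + (s * t) • y := by fun_prop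
      simpa using (this.tendsto 0).mono_left nhdsWithin_le_nhds
    choose! S hS using fun v : E => exists_suppFunc (v := v)
    have hev : ∀ᶠ t in 𝓝[>] (0 : ℝ), SuppFunc ℝ (x + (s * t) • y) (S (x + (s * t) • y)) :=
      (hp.eventually_ne hx).mono fun t ht => hS _ ht
    exact ⟨fun t => S (x + (s * t) • y), hev, SuppFunc.tendsto_apply hx hsm hφ hp hev y⟩
  obtain ⟨ψ, hψ, hψlim⟩ := key 1
  obtain ⟨χ, hχ, hχlim⟩ := key (-1)
  refine tendsto_of_tendsto_of_tendsto_of_le_of_le' (hχlim.const_mul 2) (hψlim.const_mul 2) ?_ ?_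
  · filter_upwards [hχ, self_mem_nhdsWithin] with t ht (ht0 : 0 < t)
    rw [neg_one_mul, neg_smul, ← sub_eq_add_neg] at ht
    have h1 := ht.apply_le (x + t • y)
    have h2 := ht.apply_self
    rw [map_add, map_smul, smul_eq_mul] at h1
    rw [map_sub, map_smul, smul_eq_mul] at h2
    rw [le_div_iff₀ ht0]
    linarith
  · filter_upwards [hψ, self_mem_nhdsWithin] with t ht (ht0 : 0 < t)
    rw [one_mul] at ht
    have h1 := ht.apply_le (x - t • y)
    have h2 := ht.apply_self
    rw [map_sub, map_smul, smul_eq_mul] at h1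
    rw [map_add, map_smul, smul_eq_mul] at h2
    rw [div_le_iff₀ ht0]
    linarith

end SupportFunctionals

section SemiInnerProduct

open Filter Topology

variable {E : Type*} [NormedAddCommGroup E] [NormedSpace ℝ E] {sip : E → E → ℝ}

theorem IsCompatSIP.apply (h : IsCompatSIP ℝ sip) {v : E} {φ : E →L[ℝ] ℝ} (hφ : SuppFunc ℝ v φ)
    (u : E) : sip u v = ‖v‖ * φ u := h.2 u v φ hφ

theorem IsCompatSIP.exists_linearMap_s15 (h : IsCompatSIP ℝ sip) (v : E) :
    ∃ L : E →ₗ[ℝ] ℝ, ∀ u, sip u v = L u := by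
  by_cases hv : v = 0
  · exact ⟨0, fun u => by rw [hv, h.1]; rfl⟩
  · obtain ⟨φ, hφ⟩ := exists_suppFunc hv
    exact ⟨‖v‖ • φ.toLinearMap, fun u => h.apply hφ u⟩

theorem IsCompatSIP.self (h : IsCompatSIP ℝ sip) (v : E) : sip v v = ‖v‖ ^ 2 := by
  by_cases hv : v = 0
  · simp [hv, h.1]
  · obtain ⟨φ, hφ⟩ := exists_suppFunc hv
    rw [h.apply hφ, hφ.apply_self, sq]

theorem IsCompatSIP.neg_right (h : IsCompatSIP ℝ sip) (u v : E) : sip u (-v) = -sip u v := by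
  by_cases hv : v = 0
  · simp [hv, h.1]
  · obtain ⟨φ, hφ⟩ := exists_suppFunc hv
    rw [h.apply hφ, h.apply hφ.neg, norm_neg, neg_apply, mul_neg]

theorem IsCompatSIP.neg_left (h : IsCompatSIP ℝ sip) (u v : E) : sip (-u) v = -sip u v := by
  obtain ⟨L, hL⟩ := h.exists_linearMap_s15 v
  rw [hL, hL, map_neg]

/-- In a smooth space the semi-inner product is a symmetric derivative of the norm. -/
theorem IsCompatSIP.tendsto_norm_sub_div (h : IsCompatSIP ℝ sip) (hsm : NormSmooth ℝ E) {x : E}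
    (hx : x ≠ 0) (y : E) :
    Tendsto (fun t : ℝ => ‖x‖ * ((‖x + t • y‖ - ‖x - t • y‖) / t)) (𝓝[>] 0)
      (𝓝 (2 * sip y x)) := by
  obtain ⟨φ, hφ⟩ := exists_suppFunc hx
  have := (hφ.tendsto_norm_sub_div hx (hsm x hx) y).const_mul ‖x‖
  rwa [mul_left_comm, ← h.apply hφ] at this

end SemiInnerProduct

section Wigner

open Topology

variable {X Y : Type*} [NormedAddCommGroup X] [NormedSpace ℝ X]
  [NormedAddCommGroup Y] [NormedSpace ℝ Y] {sipX : X → X → ℝ} {sipY : Y → Y → ℝ} {f : X → Y}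

theorem norm_map_of_abs_sip_eq (hX : IsCompatSIP ℝ sipX) (hY : IsCompatSIP ℝ sipY)
    (hf : ∀ x y, |sipY (f x) (f y)| = |sipX x y|) (x : X) : ‖f x‖ = ‖x‖ := by
  have h := hf x x
  rw [hX.self, hY.self, abs_of_nonneg (sq_nonneg _), abs_of_nonneg (sq_nonneg _)] at h
  exact (sq_eq_sq₀ (norm_nonneg _) (norm_nonneg _)).mp h

theorem exists_sip_vanishing_on {A : Type*} {f : A → Y} (hY : IsCompatSIP ℝ sipY)
    (hsurj : Function.Surjective f) (N : Submodule ℝ Y) [FiniteDimensional ℝ N] {w : Y}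
    (hw : w ∉ N) : ∃ u : A, (∀ n ∈ N, sipY n (f u) = 0) ∧ sipY w (f u) ≠ 0 := by
  obtain ⟨v, φ, hv0, hφ, hN, hφw⟩ := exists_suppFunc_vanishing_on N hw
  obtain ⟨u, rfl⟩ := hsurj v
  refine ⟨u, fun n hn => by rw [hY.apply hφ, hN n hn, mul_zero], ?_⟩
  rw [hY.apply hφ]
  exact mul_ne_zero (norm_ne_zero_iff.mpr hv0) hφw

theorem map_mem_span_pair (hX : IsCompatSIP ℝ sipX) (hY : IsCompatSIP ℝ sipY)
    (hsurj : Function.Surjective f) (hf : ∀ x y, |sipY (f x) (f y)| = |sipX x y|)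
    (x y : X) (a b : ℝ) : f (a • x + b • y) ∈ Submodule.span ℝ {f x, f y} := by
  by_contra hw
  have : FiniteDimensional ℝ (Submodule.span ℝ {f x, f y}) :=
    FiniteDimensional.span_of_finite ℝ (Set.toFinite _)
  obtain ⟨u, hN, hne⟩ := exists_sip_vanishing_on hY hsurj _ hw
  have hzero : ∀ z, f z ∈ Submodule.span ℝ {f x, f y} → sipX z u = 0 := fun z hz => by
    rw [← abs_eq_zero, ← hf, hN _ hz, abs_zero]
  have hx := hzero x (Submodule.subset_span (by simp))
  have hy := hzero y (Submodule.subset_span (by simp))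
  obtain ⟨L, hL⟩ := hX.exists_linearMap_s15 u
  rw [hL] at hx hy
  refine hne (abs_eq_zero.mp ?_)
  rw [hf, hL, map_add, map_smul, map_smul, hx, hy]
  simp

theorem map_smul_eq_or_neg (hX : IsCompatSIP ℝ sipX) (hY : IsCompatSIP ℝ sipY)
    (hsurj : Function.Surjective f) (hf : ∀ x y, |sipY (f x) (f y)| = |sipX x y|)
    (t : ℝ) (x : X) : f (t • x) = t • f x ∨ f (t • x) = -(t • f x) := by
  have hnorm := norm_map_of_abs_sip_eq hX hY hf
  have h := map_mem_span_pair hX hY hsurj hf x x t 0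
  rw [zero_smul, add_zero, Set.pair_eq_singleton, Submodule.mem_span_singleton] at h
  obtain ⟨c, hc⟩ := h
  by_cases hx : x = 0
  · left
    have h0 : f 0 = 0 := norm_eq_zero.mp (by rw [hnorm, norm_zero])
    simp [hx, h0]
  have h1 := hnorm (t • x)
  rw [← hc, norm_smul, norm_smul, hnorm] at h1
  have h2 : |c| = |t| := mul_right_cancel₀ (norm_ne_zero_iff.mpr hx) h1
  rcases abs_eq_abs.mp h2 with rfl | rfl
  · exact .inl hc.symm
  · exact .inr (by rw [← hc, neg_smul])

theorem exists_eq_smul_of_map_eq_smul (hX : IsCompatSIP ℝ sipX) (hY : IsCompatSIP ℝ sipY)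
    (hsurj : Function.Surjective f) (hf : ∀ x y, |sipY (f x) (f y)| = |sipX x y|)
    {x y : X} (hx : x ≠ 0) {c : ℝ} (hc : f y = c • f x) : ∃ a : ℝ, y = a • x := by
  have hnorm := norm_map_of_abs_sip_eq hX hY hf
  obtain ⟨L, hL⟩ := hX.exists_linearMap_s15 x
  have hxx : L x ≠ 0 := by
    rw [← hL, hX.self]
    exact pow_ne_zero 2 (norm_ne_zero_iff.mpr hx)
  set a : ℝ := L y / L x
  have hz := map_mem_span_pair hX hY hsurj hf x y (-a) 1
  obtain ⟨p, q, hpq⟩ := Submodule.mem_span_pair.mp hz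
  set z : X := (-a) • x + (1 : ℝ) • y with hzdef
  have hfz : f z = (p + q * c) • f x := by rw [← hpq, hc]; module
  have hLz : L z = 0 := by
    rw [hzdef, map_add, map_smul, map_smul, smul_eq_mul, smul_eq_mul]
    simp only [a]
    field_simp
    ring
  obtain ⟨M, hM⟩ := hY.exists_linearMap_s15 (f x)
  have h0 := hf z x
  rw [hL, hLz, hM, hfz, map_smul, ← hM, hY.self, hnorm, abs_zero, abs_eq_zero, smul_eq_mul] at h0
  have hcoef : p + q * c = 0 :=
    (mul_eq_zero.mp h0).resolve_right (pow_ne_zero 2 (norm_ne_zero_iff.mpr hx))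
  have hz0 : z = 0 := by
    rw [← norm_eq_zero, ← hnorm, hfz, hcoef, zero_smul, norm_zero]
  refine ⟨a, ?_⟩
  rw [← sub_eq_zero, ← hz0, hzdef]
  module

theorem abs_coeff_map_add (hX : IsCompatSIP ℝ sipX) (hY : IsCompatSIP ℝ sipY)
    (hsurj : Function.Surjective f) (hf : ∀ x y, |sipY (f x) (f y)| = |sipX x y|)
    {x y : X} (hxy : f y ∉ Submodule.span ℝ {f x}) {a b : ℝ}
    (h : f (x + y) = a • f x + b • f y) : |b| = 1 := by
  obtain ⟨u, hN, hne⟩ := exists_sip_vanishing_on hY hsurj _ hxy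
  have hfx := hN (f x) (Submodule.mem_span_singleton_self _)
  have hx : sipX x u = 0 := by rw [← abs_eq_zero, ← hf, hfx, abs_zero]
  obtain ⟨L, hL⟩ := hX.exists_linearMap_s15 u
  obtain ⟨M, hM⟩ := hY.exists_linearMap_s15 (f u)
  have h1 := hf (x + y) u
  rw [hL, map_add, ← hL, ← hL, hx, zero_add, ← hf y u, hM, h, map_add, map_smul, map_smul, ← hM,
    ← hM, hfx, smul_zero, zero_add, smul_eq_mul, abs_mul] at h1
  exact mul_right_cancel₀ (abs_ne_zero.mpr hne) (h1.trans (one_mul _).symm)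

/-- If the images of `x` and `y` are independent, then `f (x + y)` is `± f x ± f y`. -/
theorem exists_sign_map_add (hX : IsCompatSIP ℝ sipX) (hY : IsCompatSIP ℝ sipY)
    (hsurj : Function.Surjective f) (hf : ∀ x y, |sipY (f x) (f y)| = |sipX x y|)
    {x y : X} (hxy : f y ∉ Submodule.span ℝ {f x}) (hyx : f x ∉ Submodule.span ℝ {f y}) :
    ∃ ε : ℝ, (ε = 1 ∨ ε = -1) ∧
      (f (x + y) = f x + ε • f y ∨ f (x + y) = -(f x + ε • f y)) := by
  have h := map_mem_span_pair hX hY hsurj hf x y 1 1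
  rw [one_smul, one_smul] at h
  obtain ⟨a, b, hab⟩ := Submodule.mem_span_pair.mp h
  have hb := abs_coeff_map_add hX hY hsurj hf hxy hab.symm
  have ha := abs_coeff_map_add hX hY hsurj hf hyx (a := b) (b := a)
    (by rw [add_comm y x, add_comm (b • _)]; exact hab.symm)
  rw [← hab]
  rcases eq_or_eq_neg_of_abs_eq ha with rfl | rfl <;> rcases eq_or_eq_neg_of_abs_eq hb with rfl | rfl
  · exact ⟨1, .inl rfl, .inl (by module)⟩
  · exact ⟨-1, .inr rfl, .inl (by module)⟩
  · exact ⟨-1, .inr rfl, .inr (by module)⟩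
  · exact ⟨1, .inl rfl, .inr (by module)⟩

/-- Up to sign, `f` maps `x + y` and `x - y` to the sum and the difference of `f x` and `± f y`. -/
theorem exists_sign_map_add_sub (hX : IsCompatSIP ℝ sipX) (hY : IsCompatSIP ℝ sipY)
    (hsurj : Function.Surjective f) (hf : ∀ x y, |sipY (f x) (f y)| = |sipX x y|) (x y : X) :
    ∃ ε : ℝ, (ε = 1 ∨ ε = -1) ∧
      (f (x + y) = f x + ε • f y ∨ f (x + y) = -(f x + ε • f y)) ∧
      (f (x - y) = f x - ε • f y ∨ f (x - y) = -(f x - ε • f y)) := by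
  have hnorm := norm_map_of_abs_sip_eq hX hY hf
  have hsmul := map_smul_eq_or_neg hX hY hsurj hf
  -- the case of proportional vectors
  have hpar : ∀ (z : X) (a b : ℝ), ∃ ε : ℝ, (ε = 1 ∨ ε = -1) ∧
      (f (a • z + b • z) = f (a • z) + ε • f (b • z) ∨
        f (a • z + b • z) = -(f (a • z) + ε • f (b • z))) ∧
      (f (a • z - b • z) = f (a • z) - ε • f (b • z) ∨
        f (a • z - b • z) = -(f (a • z) - ε • f (b • z))) := by
    intro z a b
    rw [← add_smul, ← sub_smul]
    have key : ∃ ε : ℝ, (ε = 1 ∨ ε = -1) ∧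
        (f (a • z) = a • f z ∧ ε • f (b • z) = b • f z ∨
          f (a • z) = -(a • f z) ∧ ε • f (b • z) = -(b • f z)) := by
      rcases hsmul a z with ha | ha <;> rcases hsmul b z with hb | hb
      · exact ⟨1, .inl rfl, .inl ⟨ha, by rw [hb]; module⟩⟩
      · exact ⟨-1, .inr rfl, .inl ⟨ha, by rw [hb]; module⟩⟩
      · exact ⟨-1, .inr rfl, .inr ⟨ha, by rw [hb]; module⟩⟩
      · exact ⟨1, .inl rfl, .inr ⟨ha, by rw [hb]; module⟩⟩
    obtain ⟨ε, hε, ⟨ha, hb⟩ | ⟨ha, hb⟩⟩ := key <;> refine ⟨ε, hε, ?_, ?_⟩ <;> rw [ha, hb]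
    · exact (hsmul (a + b) z).imp (fun h => h.trans (by module)) (fun h => h.trans (by module))
    · exact (hsmul (a - b) z).imp (fun h => h.trans (by module)) (fun h => h.trans (by module))
    · exact (hsmul (a + b) z).symm.imp (fun h => h.trans (by module)) (fun h => h.trans (by module))
    · exact (hsmul (a - b) z).symm.imp (fun h => h.trans (by module)) (fun h => h.trans (by module))
  by_cases hx : x = 0
  · simpa [hx] using hpar y 0 1
  by_cases hy : y = 0
  · simpa [hy] using hpar x 1 0
  by_cases hxy : f y ∈ Submodule.span ℝ {f x}
  · obtain ⟨c, hc⟩ := Submodule.mem_span_singleton.mp hxy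
    obtain ⟨a, rfl⟩ := exists_eq_smul_of_map_eq_smul hX hY hsurj hf hx hc.symm
    simpa using hpar x 1 a
  by_cases hyx : f x ∈ Submodule.span ℝ {f y}
  · obtain ⟨c, hc⟩ := Submodule.mem_span_singleton.mp hyx
    obtain ⟨a, rfl⟩ := exists_eq_smul_of_map_eq_smul hX hY hsurj hf hy hc.symm
    simpa using hpar y a 1
  obtain ⟨ε, hε, hadd⟩ := exists_sign_map_add hX hY hsurj hf hxy hyx
  -- `f (x - y)` cannot agree with `f (x + y)` up to sign
  have hne : ∀ c : ℝ, f (x - y) ≠ c • f (x + y) := by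
    intro c hc
    have hx1 : y ≠ (-1 : ℝ) • x := by
      rintro rfl
      apply hxy
      rcases hsmul (-1) x with h | h <;> rw [h]
      · exact Submodule.smul_mem _ _ (Submodule.mem_span_singleton_self _)
      · exact Submodule.neg_mem _ (Submodule.smul_mem _ _ (Submodule.mem_span_singleton_self _))
    have hsum : x + y ≠ 0 := fun h => hx1 (by rw [eq_neg_of_add_eq_zero_right h]; module)
    obtain ⟨a, ha⟩ := exists_eq_smul_of_map_eq_smul hX hY hsurj hf hsum hc
    have hlin : (1 - a) • x = (1 + a) • y := by
      rw [← sub_eq_zero] at ha ⊢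
      rw [← ha]; module
    by_cases h1 : 1 + a = 0
    · have : (1 - a) • x = 0 := by rw [hlin, h1, zero_smul]
      rcases smul_eq_zero.mp this with h | h
      · linarith
      · exact hx h
    · have hyx' : y = ((1 + a)⁻¹ * (1 - a)) • x := by
        rw [mul_smul, hlin, smul_smul, inv_mul_cancel₀ h1, one_smul]
      apply hxy
      rcases hsmul ((1 + a)⁻¹ * (1 - a)) x with h | h <;> rw [hyx', h]
      · exact Submodule.smul_mem _ _ (Submodule.mem_span_singleton_self _)
      · exact Submodule.neg_mem _ (Submodule.smul_mem _ _ (Submodule.mem_span_singleton_self _))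
  have hneg : f (-y) = f y ∨ f (-y) = -f y := by
    have := hsmul (-1) y
    rw [neg_one_smul, neg_one_smul, neg_neg] at this
    exact this.symm
  have hxy' : f (-y) ∉ Submodule.span ℝ {f x} := by
    rcases hneg with h | h <;> rw [h]
    · exact hxy
    · rwa [Submodule.neg_mem_iff]
  have hyx' : f x ∉ Submodule.span ℝ {f (-y)} := by
    rcases hneg with h | h <;> rw [h]
    · exact hyx
    · rwa [← Set.neg_singleton, Submodule.span_neg]
  obtain ⟨δ, hδ, hsub⟩ := exists_sign_map_add hX hY hsurj hf hxy' hyx'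
  rw [← sub_eq_add_neg] at hsub
  obtain ⟨η, hη, hdiff⟩ : ∃ η : ℝ, (η = 1 ∨ η = -1) ∧
      (f (x - y) = f x + η • f y ∨ f (x - y) = -(f x + η • f y)) := by
    rcases hneg with h | h <;> rw [h] at hsub
    · exact ⟨δ, hδ, hsub⟩
    · refine ⟨-δ, ?_, by rwa [neg_smul, ← smul_neg]⟩
      rcases hδ with rfl | rfl <;> simp
  have hηε : η ≠ ε := by
    rintro rfl
    rcases hadd with h | h <;> rcases hdiff with h' | h'
    · exact hne 1 (by rw [h, h', one_smul])
    · exact hne (-1) (by rw [h, h', neg_one_smul])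
    · exact hne (-1) (by rw [h, h', neg_one_smul, neg_neg])
    · exact hne 1 (by rw [h, h', one_smul])
  have hη' : η = -ε := by
    rcases hε with rfl | rfl <;> rcases hη with rfl | rfl <;> simp_all
  refine ⟨ε, hε, hadd, ?_⟩
  rwa [hη', neg_smul, ← sub_eq_add_neg] at hdiff

/-- The parallelogram law makes the polar form additive. -/
theorem polar_add_of_parallelogram {A B : Type*} [AddCommGroup A] [AddCommGroup B] [Module ℝ B]
    {Q : A → B} (hQ : ∀ x y, Q (x + y) + Q (x - y) = (2 : ℝ) • (Q x + Q y)) (x y z : A) :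
    Q (x + (y + z)) - Q (x - (y + z)) = (Q (x + y) - Q (x - y)) + (Q (x + z) - Q (x - z)) := by
  have h1 := hQ (x + y) z
  have h2 := hQ (x - y) z
  have h3 := hQ (x + z) y
  have h4 := hQ (x - z) y
  rw [show x + y + z = x + (y + z) by abel, show x + y - z = x + (y - z) by abel] at h1
  rw [show x - y + z = x - (y - z) by abel, show x - y - z = x - (y + z) by abel] at h2
  rw [show x + z + y = x + (y + z) by abel, show x + z - y = x - (y - z) by abel] at h3
  rw [show x - z + y = x + (y - z) by abel, show x - z - y = x - (y + z) by abel] at h4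
  linear_combination (norm := module) (1 / 2 : ℝ) • h1 - (1 / 2 : ℝ) • h2 + (1 / 2 : ℝ) • h3 -
    (1 / 2 : ℝ) • h4

/-- Wigner's theorem: a surjection preserving the absolute value of the semi-inner products is
phase equivalent to a surjective linear isometry. -/
theorem exists_linear_isometry_of_abs_sip_eq (hX : IsCompatSIP ℝ sipX) (hY : IsCompatSIP ℝ sipY)
    (hsurj : Function.Surjective f) (hf : ∀ x y, |sipY (f x) (f y)| = |sipX x y|) :
    ∃ U : X →ₗ[ℝ] Y, Function.Surjective U ∧ (∀ x, ‖U x‖ = ‖x‖) ∧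
      ∃ σ : X → ℝ, (∀ x, ‖σ x‖ = 1) ∧ ∀ x, f x = σ x • U x := by
  have hnorm := norm_map_of_abs_sip_eq hX hY hf
  have hsign := exists_sign_map_add_sub hX hY hsurj hf
  suffices h : ∃ U : X →+ Y, ∃ ε : X → ℝ, ∀ y, (ε y = 1 ∨ ε y = -1) ∧ U y = ε y • f y by
    obtain ⟨U, ε, hU⟩ := h
    have hε : ∀ y, ‖ε y‖ = 1 := fun y => by rcases (hU y).1 with h | h <;> simp [h]
    have hεε : ∀ y, ε y * ε y = 1 := fun y => by rcases (hU y).1 with h | h <;> simp [h]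
    have hUn : ∀ y, ‖U y‖ = ‖y‖ := fun y => by rw [(hU y).2, norm_smul, hε, one_mul, hnorm]
    have hUc : Continuous U := (AddMonoidHomClass.isometry_of_norm U hUn).continuous
    refine ⟨(U.toRealLinearMap hUc).toLinearMap, fun w => ?_, hUn, ε, hε, fun y => ?_⟩
    · obtain ⟨y, rfl⟩ := hsurj w
      refine ⟨ε y • y, ?_⟩
      rw [map_smul]
      change ε y • U y = f y
      rw [(hU y).2, smul_smul, hεε, one_smul]
    · change f y = ε y • U y
      rw [(hU y).2, smul_smul, hεε, one_smul]
  rcases subsingleton_or_nontrivial X with hs | hs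
  · refine ⟨0, fun _ => 1, fun y => ⟨.inl rfl, ?_⟩⟩
    have : f y = 0 := norm_eq_zero.mp (by rw [hnorm, Subsingleton.elim y 0, norm_zero])
    simp [this]
  obtain ⟨x₀, hx₀⟩ := exists_ne (0 : X)
  have hfx₀ : f x₀ ≠ 0 := by rwa [← norm_ne_zero_iff, hnorm, norm_ne_zero_iff]
  obtain ⟨φ, hφ⟩ := exists_suppFunc hfx₀
  have hφ0 : φ (f x₀) ≠ 0 := by rw [hφ.apply_self]; exact norm_ne_zero_iff.mpr hfx₀
  set g : Y →ₗ[ℝ] ℝ := (φ (f x₀))⁻¹ • φ.toLinearMap with hg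
  have hg1 : g (f x₀) = 1 := inv_mul_cancel₀ hφ0
  let Q : X → Y := fun x => g (f x) • f x
  have hQ : ∀ x y, Q (x + y) + Q (x - y) = (2 : ℝ) • (Q x + Q y) := by
    intro x y
    obtain ⟨ε, hε, h1, h2⟩ := hsign x y
    simp only [Q]
    rcases hε with rfl | rfl <;> rcases h1 with h1 | h1 <;> rcases h2 with h2 | h2 <;>
      rw [h1, h2] <;> simp only [map_add, map_sub, map_neg, map_smul, smul_eq_mul] <;> module
  let D : X → Y := fun y => (1 / 2 : ℝ) • (Q (x₀ + y) - Q (x₀ - y))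
  have hDadd : ∀ y z, D (y + z) = D y + D z := fun y z => by
    simp only [D]
    rw [polar_add_of_parallelogram hQ, smul_add]
  have hD : ∀ y, ∃ ε : ℝ, (ε = 1 ∨ ε = -1) ∧ D y = ε • (f y + g (f y) • f x₀) := by
    intro y
    obtain ⟨ε, hε, h1, h2⟩ := hsign x₀ y
    refine ⟨ε, hε, ?_⟩
    simp only [D, Q]
    rcases hε with rfl | rfl <;> rcases h1 with h1 | h1 <;> rcases h2 with h2 | h2 <;>
      rw [h1, h2] <;> simp only [map_add, map_sub, map_neg, map_smul, smul_eq_mul, hg1] <;> module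
  choose ε hε hDε using hD
  refine ⟨AddMonoidHom.mk' (fun y => D y - ((1 / 2 : ℝ) * g (D y)) • f x₀) fun y z => ?_, ε,
    fun y => ⟨hε y, ?_⟩⟩
  · rw [hDadd, map_add]; module
  · change D y - ((1 / 2 : ℝ) * g (D y)) • f x₀ = _
    rw [hDε]
    simp only [map_add, map_smul, smul_eq_mul, hg1]
    module

theorem sip_map_of_linear_isometry (hX : IsCompatSIP ℝ sipX) (hY : IsCompatSIP ℝ sipY)
    (U : X →ₗ[ℝ] Y) (hU : ∀ x, ‖U x‖ = ‖x‖) (x y : X) : sipY (U x) (U y) = sipX x y := by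
  by_cases hy : y = 0
  · rw [hy, map_zero, hX.1, hY.1]
  have hUy : U y ≠ 0 := by rwa [← norm_ne_zero_iff, hU, norm_ne_zero_iff]
  obtain ⟨φ, hφ⟩ := exists_suppFunc hUy
  let V : X →L[ℝ] Y := U.mkContinuous 1 fun x => by rw [hU, one_mul]
  have hV : SuppFunc ℝ y (φ.comp V) := by
    refine .of_norm_le_one hy ?_ (hφ.apply_self.trans (hU y))
    refine (φ.opNorm_comp_le V).trans ?_
    rw [hφ.1, one_mul]
    exact U.mkContinuous_norm_le zero_le_one _
  rw [hY.apply hφ, hX.apply hV, hU]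
  rfl

theorem eq_or_eq_neg_smul_of_abs_eq_one {E : Type*} [AddCommGroup E] [Module ℝ E] {s : ℝ}
    (hs : ‖s‖ = 1) (v : E) : s • v = v ∨ s • v = -v := by
  rcases eq_or_eq_neg_of_abs_eq hs with rfl | rfl
  · exact .inl (one_smul _ _)
  · exact .inr (neg_one_smul _ _)

/-- A map with the phase-isometry property into a strictly convex space is homogeneous up to
sign. -/
theorem map_smul_eq_or_neg_of_norm_pair [StrictConvexSpace ℝ Y]
    (h : ∀ x y : X, ({‖f x + f y‖, ‖f x - f y‖} : Set ℝ) = {‖x + y‖, ‖x - y‖})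
    (hnorm : ∀ x, ‖f x‖ = ‖x‖) {t : ℝ} (ht : 0 < t) (x : X) :
    f (t • x) = t • f x ∨ f (t • x) = -(t • f x) := by
  have hsum : ‖t • x + x‖ = ‖f (t • x)‖ + ‖f x‖ := by
    rw [hnorm, hnorm, show t • x + x = (t + 1) • x by module, norm_smul, norm_smul,
      Real.norm_of_nonneg ht.le, Real.norm_of_nonneg (by positivity)]
    ring
  have hray : ∀ v : Y, ‖v‖ = ‖f x‖ → ‖f (t • x) + v‖ = ‖f (t • x)‖ + ‖v‖ →
      f (t • x) = t • v := by
    intro v hv hadd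
    have hs := (sameRay_iff_norm_add.mpr hadd).norm_smul_eq
    rw [hnorm, hv, hnorm, norm_smul, Real.norm_of_nonneg ht.le] at hs
    by_cases hx : x = 0
    · have hv0 : v = 0 := by rw [← norm_eq_zero, hv, hnorm, hx, norm_zero]
      have hf0 : f (t • x) = 0 := by rw [← norm_eq_zero, hnorm, hx, smul_zero, norm_zero]
      rw [hv0, hf0, smul_zero]
    · rw [mul_comm, mul_smul] at hs
      exact (smul_right_injective Y (norm_ne_zero_iff.mpr hx) hs).symm
  have hmem : ‖t • x + x‖ ∈ ({‖f (t • x) + f x‖, ‖f (t • x) - f x‖} : Set ℝ) := by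
    rw [h]; simp
  rcases hmem with hm | hm
  · exact .inl (hray _ rfl (hm.symm.trans hsum))
  · right
    rw [← smul_neg]
    refine hray _ (norm_neg _) ?_
    rw [← sub_eq_add_neg, norm_neg]
    exact (Set.mem_singleton_iff.mp hm).symm.trans hsum

theorem abs_sub_eq_of_pair_eq {a b c d : ℝ} (h : ({a, b} : Set ℝ) = {c, d}) :
    |a - b| = |c - d| := by
  rcases Set.pair_eq_pair_iff.mp h with ⟨rfl, rfl⟩ | ⟨rfl, rfl⟩
  · rfl
  · exact abs_sub_comm _ _

theorem abs_sip_eq_of_norm_pair [StrictConvexSpace ℝ Y] (hsmX : NormSmooth ℝ X)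
    (hsmY : NormSmooth ℝ Y) (hX : IsCompatSIP ℝ sipX) (hY : IsCompatSIP ℝ sipY)
    (h : ∀ x y : X, ({‖f x + f y‖, ‖f x - f y‖} : Set ℝ) = {‖x + y‖, ‖x - y‖}) (x y : X) :
    |sipY (f x) (f y)| = |sipX x y| := by
  have hnorm : ∀ x, ‖f x‖ = ‖x‖ := fun x => by
    have := abs_sub_eq_of_pair_eq (h x x)
    rw [sub_self, sub_self, norm_zero, norm_zero, sub_zero, sub_zero, abs_norm, abs_norm,
      ← two_smul ℝ, ← two_smul ℝ, norm_smul, norm_smul] at this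
    exact mul_left_cancel₀ (by norm_num) this
  by_cases hy : y = 0
  · have hf0 : f y = 0 := by rw [← norm_eq_zero, hnorm, hy, norm_zero]
    rw [hf0, hy, hX.1, hY.1]
  have hfy : f y ≠ 0 := by rwa [← norm_ne_zero_iff, hnorm, norm_ne_zero_iff]
  have h1 := (hX.tendsto_norm_sub_div hsmX hy x).abs
  have h2 := (hY.tendsto_norm_sub_div hsmY hfy (f x)).abs
  have heq : ∀ᶠ t in 𝓝[>] (0 : ℝ),
      |‖f y‖ * ((‖f y + t • f x‖ - ‖f y - t • f x‖) / t)| =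
        |‖y‖ * ((‖y + t • x‖ - ‖y - t • x‖) / t)| := by
    filter_upwards [self_mem_nhdsWithin] with t ht
    rw [abs_mul, abs_mul, abs_div, abs_div, hnorm, ← abs_sub_eq_of_pair_eq (h y (t • x))]
    rcases map_smul_eq_or_neg_of_norm_pair h hnorm ht x with hs | hs <;> rw [hs]
    rw [← sub_eq_add_neg, sub_neg_eq_add, abs_sub_comm]
  have := tendsto_nhds_unique (h2.congr' heq) h1
  rw [abs_mul, abs_mul] at this
  exact mul_left_cancel₀ (by norm_num) this

end Wigner

theorem stmt15 {X Y : Type*} [NormedAddCommGroup X] [NormedSpace ℝ X]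
    [NormedAddCommGroup Y] [NormedSpace ℝ Y] [StrictConvexSpace ℝ Y]
    (hsmX : NormSmooth ℝ X) (hsmY : NormSmooth ℝ Y)
    (sipX : X → X → ℝ) (hX : IsCompatSIP ℝ sipX)
    (sipY : Y → Y → ℝ) (hY : IsCompatSIP ℝ sipY)
    (f : X → Y) (hsurj : Function.Surjective f) :
    ((∀ x y : X, ‖sipY (f x) (f y)‖ = ‖sipX x y‖) ↔
      (∃ U : X →ₗ[ℝ] Y, Function.Surjective U ∧ (∀ x : X, ‖U x‖ = ‖x‖) ∧
        ∃ σ : X → ℝ, (∀ x : X, ‖σ x‖ = 1) ∧ ∀ x : X, f x = σ x • U x)) ∧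
    ((∀ x y : X, ‖sipY (f x) (f y)‖ = ‖sipX x y‖) ↔
      (∀ x y : X, ({‖f x + f y‖, ‖f x - f y‖} : Set ℝ) = {‖x + y‖, ‖x - y‖})) := by
  have hii_i : (∃ U : X →ₗ[ℝ] Y, Function.Surjective U ∧ (∀ x : X, ‖U x‖ = ‖x‖) ∧
      ∃ σ : X → ℝ, (∀ x : X, ‖σ x‖ = 1) ∧ ∀ x : X, f x = σ x • U x) →
      ∀ x y : X, ‖sipY (f x) (f y)‖ = ‖sipX x y‖ := by
    rintro ⟨U, -, hU, σ, hσ, hfσ⟩ x y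
    rw [← sip_map_of_linear_isometry hX hY U hU, hfσ, hfσ]
    rcases eq_or_eq_neg_smul_of_abs_eq_one (hσ x) (U x) with hx | hx <;>
      rcases eq_or_eq_neg_smul_of_abs_eq_one (hσ y) (U y) with hy | hy <;>
      simp only [hx, hy, hY.neg_left, hY.neg_right, norm_neg]
  have hi_ii := exists_linear_isometry_of_abs_sip_eq (f := f) hX hY hsurj
  refine ⟨⟨hi_ii, hii_i⟩, fun hi x y => ?_, abs_sip_eq_of_norm_pair hsmX hsmY hX hY⟩
  obtain ⟨U, -, hU, σ, hσ, hfσ⟩ := hi_ii hi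
  rw [← hU (x + y), ← hU (x - y), map_add, map_sub, hfσ, hfσ]
  rcases eq_or_eq_neg_smul_of_abs_eq_one (hσ x) (U x) with hx | hx <;>
    rcases eq_or_eq_neg_smul_of_abs_eq_one (hσ y) (U y) with hy | hy <;> rw [hx, hy]
  · rw [← sub_eq_add_neg, sub_neg_eq_add, Set.pair_comm]
  · rw [neg_add_eq_sub, norm_sub_rev, ← neg_add', norm_neg, Set.pair_comm]
  · rw [← neg_add, norm_neg, neg_sub_neg, norm_sub_rev]
end
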